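/- Let (G,B) be an enhanced Rota-Baxter two-sided brace, with B₊(a) = a ∘ B(a), G₊ = Im B₊, G₋ = Im B, K₊ = Ker B, K₋ = Ker B₊. Then the map Θ : G₋/K₋ → G₊/K₊ defined by Θ([B(a)]) = [B₊(a)] for a ∈ G is well defined (independent of the choice of a with given class [B(a)]) and is an isomorphism of braces between the quotient braces G₋/K₋ and G₊/K₊. -/

import Mathlib

/-!
At `x = (B a)⁻¹` the enhanced identity reads `B (a ∘ b) = B a · B b`. So `B` is a homomorphism from
`(G, ∘)` to an abelian group and is constant on `∘`-conjugacy classes, and at `a = e` the enhanced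
identity becomes `x ∘ B b = x · B b`. In particular `B₊ a = a · B a`, so `B₊ = id · B` is an
endomorphism of `(G, ·)` which commutes with `B`. For `c = a · b⁻¹` the conditions `[B a] = [B b]`
and `[B₊ a] = [B₊ b]` therefore read `B₊ (B c) = e` and `B (B₊ c) = e`, which are the same.
Already before passing to quotients, `B₊` preserves `·` and, by cancellation in `(G, ∘)`, maps the
descendent operation `a ∗ b = a ∘ Ad∘_{B a} b` to `∘`.
-/

structure IsGroup {G : Type*} (op : G → G → G) (e : G) (inv : G → G) : Prop where
  assoc : ∀ a b c, op (op a b) c = op a (op b c)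
  one_op : ∀ a, op e a = a
  op_one : ∀ a, op a e = a
  inv_op : ∀ a, op (inv a) a = e
  op_inv : ∀ a, op a (inv a) = e

/-- A brace: an abelian group `(G, mul)` and a group `(G, circ)` with the compatibility
`a ∘ (b · c) = (a ∘ b) · a⁻¹ · (a ∘ c)`. -/
structure IsBrace {G : Type*} (mul : G → G → G) (e : G) (inv : G → G)
    (circ : G → G → G) (ce : G) (cinv : G → G) : Prop where
  mul_group : IsGroup mul e inv
  mul_comm : ∀ a b, mul a b = mul b a
  circ_group : IsGroup circ ce cinv
  compat : ∀ a b c, circ a (mul b c) = mul (mul (circ a b) (inv a)) (circ a c)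

/-- A homomorphism of braces preserves both operations. -/
def IsBraceHom {G H : Type*} (mulG circG : G → G → G) (mulH circH : H → H → H)
    (f : G → H) : Prop :=
  (∀ a b, f (mulG a b) = mulH (f a) (f b)) ∧ (∀ a b, f (circG a b) = circH (f a) (f b))

/-- A brace automorphism: a bijective self-homomorphism. -/
def IsBraceAut {H : Type*} (mulH circH : H → H → H) (f : H → H) : Prop :=
  Function.Bijective f ∧ IsBraceHom mulH circH mulH circH f

/-- A semi-trivial action of the brace `G` on the brace `H`: each `Φ a` is a brace
automorphism of `H` and `Φ (a ∘ b) = Φ a ∘ Φ b`. -/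
def IsSemiTrivialAction {G H : Type*} (circG : G → G → G)
    (mulH circH : H → H → H) (Φ : G → H → H) : Prop :=
  (∀ a, IsBraceAut mulH circH (Φ a)) ∧ (∀ a b h, Φ (circG a b) h = Φ a (Φ b h))

/-- A relative Rota-Baxter operator on the brace `G` with respect to the semi-trivial
action `Φ` of `G` on `H`. -/
def IsRelRBO {G H : Type*} (mulG circG : G → G → G) (mulH circH : H → H → H)
    (Φ : G → H → H) (B : H → G) : Prop :=
  (∀ h k, mulG (B h) (B k) = B (mulH h k)) ∧
  (∀ h k, circG (B h) (B k) = B (circH h (Φ (B h) k)))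

/-- An enhanced relative Rota-Baxter operator. -/
def IsEnhancedRelRBO {G H : Type*} (mulG circG : G → G → G) (mulH circH : H → H → H)
    (Φ : G → H → H) (B : H → G) : Prop :=
  (∀ h k, mulG (B h) (B k) = B (mulH h k)) ∧
  (∀ (a : G) (h k : H), circG (mulG (B h) a) (B k)
      = mulG (B (circH h (Φ (mulG (B h) a) k))) a)

/-- A post-group: a group `(G, circ)` with an operation `tri` such that each left
multiplication `tri a` is an automorphism of `(G, circ)` and the weighted associativity
`(a ∘ (a ⊳ b)) ⊳ c = a ⊳ (b ⊳ c)` holds. -/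
structure IsPostGroup {G : Type*} (circ : G → G → G) (ce : G) (cinv : G → G)
    (tri : G → G → G) : Prop where
  circ_group : IsGroup circ ce cinv
  tri_bij : ∀ a, Function.Bijective (tri a)
  tri_circ : ∀ a b c, tri a (circ b c) = circ (tri a b) (tri a c)
  weighted : ∀ a b c, tri (circ a (tri a b)) c = tri a (tri b c)

/-- A post-brace: a brace `(G, mul, circ)` with `tri` making `(G, circ, tri)` a post-group
and `a ⊳ (b · c) = (a ⊳ b) · (a ⊳ c)`. -/
structure IsPostBrace {G : Type*} (mul : G → G → G) (e : G) (inv : G → G)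
    (circ : G → G → G) (ce : G) (cinv : G → G) (tri : G → G → G) : Prop where
  brace : IsBrace mul e inv circ ce cinv
  post : IsPostGroup circ ce cinv tri
  tri_mul : ∀ a b c, tri a (mul b c) = mul (tri a b) (tri a c)

/-- A two-sided brace. -/
def IsTwoSidedBrace {G : Type*} (mul : G → G → G) (e : G) (inv : G → G)
    (circ : G → G → G) (ce : G) (cinv : G → G) : Prop :=
  IsBrace mul e inv circ ce cinv ∧
  ∀ a b c, circ (mul a b) c = mul (mul (circ a c) (inv c)) (circ b c)

/-- The adjoint action of the `circ`-group: `Ad∘_a(b) = a ∘ b ∘ ā`. -/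
def adC {G : Type*} (circ : G → G → G) (cinv : G → G) (a b : G) : G :=
  circ (circ a b) (cinv a)

/-- A Rota-Baxter operator on a two-sided brace (w.r.t. the adjoint semi-trivial action). -/
def IsRBTwoSided {G : Type*} (mul circ : G → G → G) (cinv : G → G) (B : G → G) : Prop :=
  (∀ a b, mul (B a) (B b) = B (mul a b)) ∧
  (∀ a b, circ (B a) (B b) = B (circ a (adC circ cinv (B a) b)))

/-- An enhanced Rota-Baxter operator on a two-sided brace. -/
def IsEnhancedRBTwoSided {G : Type*} (mul circ : G → G → G) (cinv : G → G)
    (B : G → G) : Prop :=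
  IsRBTwoSided mul circ cinv B ∧
  ∀ a b x, circ (mul (B a) x) (B b)
      = mul (B (circ a (adC circ cinv (mul (B a) x) b))) x

/-- `R × Id` on `X × X × X`. -/
def YB12 {X : Type*} (R : X × X → X × X) : X × X × X → X × X × X :=
  fun p => ((R (p.1, p.2.1)).1, (R (p.1, p.2.1)).2, p.2.2)

/-- `Id × R` on `X × X × X`. -/
def YB23 {X : Type*} (R : X × X → X × X) : X × X × X → X × X × X :=
  fun p => (p.1, R p.2)

/-- A set-theoretical solution of the Yang-Baxter equation. -/
def IsYBSolution {X : Type*} (R : X × X → X × X) : Prop :=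
  Function.Bijective R ∧
  YB12 R ∘ YB23 R ∘ YB12 R = YB23 R ∘ YB12 R ∘ YB23 R

/-- Non-degeneracy of a solution `R (a, b) = (φ_a b, ψ_b a)`. -/
def IsNonDegenerate {X : Type*} (R : X × X → X × X) : Prop :=
  (∀ a, Function.Bijective fun b => (R (a, b)).1) ∧
  (∀ b, Function.Bijective fun a => (R (a, b)).2)

/-- Involutivity of a solution: `R ∘ R = Id`. -/
def IsInvolutiveSol {X : Type*} (R : X × X → X × X) : Prop :=
  ∀ p, R (R p) = p

/-- A matched pair of groups `(G, H, σ)` with `σ (a, h) = (r a h, l a h)`. -/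
def IsMatchedPairOfGroups {G H : Type*} (opG : G → G → G) (eG : G)
    (opH : H → H → H) (eH : H) (r : G → H → H) (l : G → H → G) : Prop :=
  (∀ h, r eG h = h) ∧
  (∀ a b h, r a (r b h) = r (opG a b) h) ∧
  (∀ a b h, l (opG a b) h = opG (l a (r b h)) (l b h)) ∧
  (∀ a, l a eH = a) ∧
  (∀ a h k, l (l a h) k = l a (opH h k)) ∧
  (∀ a h k, r a (opH h k) = opH (r a h) (r (l a h) k))

/-- A left ideal of the brace with multiplication `op` (with unit `u`) and second
operation `cop`: a subgroup of the `op`-group such that `p⁻¹ op (p cop x) ∈ S`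
(expressed via the unique solution `r` of `op p r = cop p x`). -/
def IsLeftIdealOf {P : Type*} (op : P → P → P) (u : P) (cop : P → P → P)
    (S : Set P) : Prop :=
  u ∈ S ∧ (∀ p ∈ S, ∀ q ∈ S, op p q ∈ S) ∧
  (∀ p ∈ S, ∃ q ∈ S, op p q = u ∧ op q p = u) ∧
  (∀ p : P, ∀ x ∈ S, ∀ r, op p r = cop p x → r ∈ S)

/-- `I` is an ideal of the sub-brace `S` of the ambient brace: a subgroup of `(S, mul)`,
normal in `(S, mul)` and in `(S, circ)`, and a left ideal of `S`. -/
def IsIdealOfSub {G : Type*} (mul : G → G → G) (e : G) (inv : G → G)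
    (circ : G → G → G) (cinv : G → G) (S I : Set G) : Prop :=
  I ⊆ S ∧ e ∈ I ∧
  (∀ x ∈ I, ∀ y ∈ I, mul x y ∈ I) ∧ (∀ x ∈ I, inv x ∈ I) ∧
  (∀ s ∈ S, ∀ x ∈ I, mul (mul s x) (inv s) ∈ I) ∧
  (∀ s ∈ S, ∀ x ∈ I, circ (circ s x) (cinv s) ∈ I) ∧
  (∀ s ∈ S, ∀ x ∈ I, mul (inv s) (circ s x) ∈ I)

/-- The bundled commutative group of an unbundled one, so that `(G, ·)` can use Mathlib's group
theory. -/
abbrev IsGroup.toCommGroup {G : Type*} {mul : G → G → G} {e : G} {inv : G → G}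
    (h : IsGroup mul e inv) (mul_comm : ∀ a b, mul a b = mul b a) : CommGroup G where
  mul := mul
  one := e
  inv := inv
  mul_assoc := h.assoc
  one_mul := h.one_op
  mul_one := h.op_one
  inv_mul_cancel := h.inv_op
  mul_comm := mul_comm

theorem IsBrace.circ_unit_eq {G : Type*} {mul : G → G → G} {e : G} {inv : G → G}
    {circ : G → G → G} {ce : G} {cinv : G → G} (h : IsBrace mul e inv circ ce cinv) :
    ce = e := by
  have inv_ce : e = inv ce := by
    simpa only [h.mul_group.op_one, h.mul_group.one_op, h.circ_group.one_op] using h.compat ce e e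
  simpa only [← inv_ce, h.mul_group.op_one] using h.mul_group.op_inv ce

namespace IsGroup

variable {G : Type*} {op : G → G → G} {e : G} {inv : G → G}

theorem adC_unit (h : IsGroup op e inv) (b : G) : adC op inv e b = b := by
  have inv_unit : inv e = e := (h.op_one _).symm.trans (h.inv_op e)
  rw [adC, inv_unit, h.op_one, h.one_op]

theorem op_adC_op (h : IsGroup op e inv) (a b x y : G) :
    op (op a (adC op inv x b)) (op x y) = op (op a x) (op b y) := by
  simp only [adC, h.assoc]
  rw [← h.assoc (inv x), h.inv_op, h.one_op]

end IsGroup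

theorem map_map_div_map_of_commute {G : Type*} [Group G] {f g : G →* G}
    (hfg : Function.Commute f g) (a b : G) : f (g a / g b) = g (f a / f b) := by
  rw [← map_div, hfg, map_div f]

section

variable {G : Type*} [CommGroup G]

/-- The enhanced Rota-Baxter identity for an endomorphism `B` of the abelian group `(G, ·)`, with
respect to a second operation `circ` on `G` whose inversion is `cinv`. Multiplicativity of `B` is
carried by its type, and the Rota-Baxter identity for `circ` is the case `x = 1`. -/
def IsEnhancedRotaBaxter (circ : G → G → G) (cinv : G → G) (B : G →* G) : Prop :=
  ∀ a b x, circ (B a * x) (B b) = B (circ a (adC circ cinv (B a * x) b)) * x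

namespace IsEnhancedRotaBaxter

variable {circ : G → G → G} {cinv : G → G} {B : G →* G}

theorem circ_map_map (hB : IsEnhancedRotaBaxter circ cinv B) (a b : G) :
    circ (B a) (B b) = B (circ a (adC circ cinv (B a) b)) := by
  simpa only [mul_one] using hB a b 1

theorem map_circ (hB : IsEnhancedRotaBaxter circ cinv B) (hcirc : IsGroup circ 1 cinv) (a b : G) :
    B (circ a b) = B a * B b := by
  have map_circ_mul_inv : B b = B (circ a b) * (B a)⁻¹ := by
    simpa only [mul_inv_cancel, hcirc.one_op, hcirc.adC_unit] using hB a b (B a)⁻¹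
  rw [map_circ_mul_inv, mul_comm, inv_mul_cancel_right]

theorem map_adC (hB : IsEnhancedRotaBaxter circ cinv B) (hcirc : IsGroup circ 1 cinv) (x b : G) :
    B (adC circ cinv x b) = B b :=
  calc B (adC circ cinv x b)
    _ = B b * (B x * B (cinv x)) := by
      rw [adC, hB.map_circ hcirc, hB.map_circ hcirc, mul_comm (B x), mul_assoc]
    _ = B b := by rw [← hB.map_circ hcirc, hcirc.op_inv, map_one, mul_one]

theorem circ_map (hB : IsEnhancedRotaBaxter circ cinv B) (hcirc : IsGroup circ 1 cinv) (x b : G) :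
    circ x (B b) = x * B b := by
  have enhanced_one : circ x (B b) = B (adC circ cinv x b) * x := by
    simpa only [map_one, one_mul, hcirc.one_op] using hB 1 b x
  rw [enhanced_one, hB.map_adC hcirc, mul_comm]

theorem circ_map_descendent (hB : IsEnhancedRotaBaxter circ cinv B) (hcirc : IsGroup circ 1 cinv)
    (a b : G) :
    circ (circ a (adC circ cinv (B a) b)) (B (circ a (adC circ cinv (B a) b))) =
      circ (circ a (B a)) (circ b (B b)) := by
  rw [← hB.circ_map_map, hcirc.op_adC_op]

end IsEnhancedRotaBaxter

theorem commute_id_mul (B : G →* G) : Function.Commute (MonoidHom.id G * B : G →* G) B :=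
  fun a => (map_mul B a (B a)).symm

theorem statement18_general {circ : G → G → G} {cinv : G → G} (hcirc : IsGroup circ 1 cinv)
    {B : G →* G} (hB : IsEnhancedRotaBaxter circ cinv B)
    {Bplus : G → G} (hBplus : ∀ a, Bplus a = circ a (B a)) :
    (∀ a b : G, B a / B b ∈ {x : G | Bplus x = 1} → Bplus a / Bplus b ∈ B.ker) ∧
    (∀ a b : G, Bplus a / Bplus b ∈ B.ker → B a / B b ∈ {x : G | Bplus x = 1}) ∧
    (∀ y ∈ Set.range Bplus, ∃ a : G, y / Bplus a ∈ B.ker) ∧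
    (∀ a b : G, Bplus (a * b) / (Bplus a * Bplus b) ∈ B.ker) ∧
    (∀ a b : G, Bplus (circ a (adC circ cinv (B a) b)) / circ (Bplus a) (Bplus b) ∈ B.ker) := by
  have Bplus_eq : Bplus = ⇑(MonoidHom.id G * B) :=
    funext fun a => (hBplus a).trans (hB.circ_map hcirc a a)
  have Bplus_descendent (a b : G) :
      Bplus (circ a (adC circ cinv (B a) b)) = circ (Bplus a) (Bplus b) := by
    simp only [hBplus, hB.circ_map_descendent hcirc]
  have div_mem_iff (a b : G) :
      B a / B b ∈ {x : G | Bplus x = 1} ↔ Bplus a / Bplus b ∈ B.ker := by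
    rw [Set.mem_ofPred_eq, Bplus_eq, map_map_div_map_of_commute (commute_id_mul B),
      MonoidHom.mem_ker]
  have div_self_mem (y : G) : y / y ∈ B.ker := by
    rw [div_self']
    exact one_mem _
  refine ⟨fun a b => (div_mem_iff a b).mp, fun a b => (div_mem_iff a b).mpr, ?_, ?_, ?_⟩
  · rintro _ ⟨a, rfl⟩
    exact ⟨a, div_self_mem _⟩
  · intro a b
    rw [Bplus_eq, map_mul]
    exact div_self_mem _
  · intro a b
    rw [Bplus_descendent]
    exact div_self_mem _

end

/-- The Cayley transform `Θ : G₋/K₋ → G₊/K₊`, `Θ([B(a)]) = [B₊(a)]`,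
is well defined and an isomorphism of braces between the quotient braces, expressed at
the level of coset representatives: classes `[x] = [y]` correspond to `x · y⁻¹` lying in
the relevant kernel. -/
theorem statement18 {G : Type*} (mul : G → G → G) (e : G) (inv : G → G)
    (circ : G → G → G) (ce : G) (cinv : G → G)
    (hG : IsTwoSidedBrace mul e inv circ ce cinv)
    (B : G → G) (hB : IsEnhancedRBTwoSided mul circ cinv B)
    (Bplus : G → G) (hBplus : ∀ a, Bplus a = circ a (B a)) :
    -- Θ is well defined
    (∀ a b : G, mul (B a) (inv (B b)) ∈ {x : G | Bplus x = e} →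
      mul (Bplus a) (inv (Bplus b)) ∈ {x : G | B x = e}) ∧
    -- Θ is injective
    (∀ a b : G, mul (Bplus a) (inv (Bplus b)) ∈ {x : G | B x = e} →
      mul (B a) (inv (B b)) ∈ {x : G | Bplus x = e}) ∧
    -- Θ is surjective
    (∀ y ∈ Set.range Bplus, ∃ a : G, mul y (inv (Bplus a)) ∈ {x : G | B x = e}) ∧
    -- Θ preserves the abelian-group operation of the quotient braces
    (∀ a b : G, mul (Bplus (mul a b)) (inv (mul (Bplus a) (Bplus b)))
        ∈ {x : G | B x = e}) ∧
    -- Θ preserves the circle operation of the quotient braces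
    (∀ a b : G, mul (Bplus (circ a (adC circ cinv (B a) b)))
        (inv (circ (Bplus a) (Bplus b))) ∈ {x : G | B x = e}) := by
  obtain rfl := hG.1.circ_unit_eq
  let := hG.1.mul_group.toCommGroup hG.1.mul_comm
  exact statement18_general (B := .mk' B fun a b => (hB.1.1 a b).symm) hG.1.circ_group hB.2 hBplus
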